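/- Corollary to Theorem 6.1: with the notation of the context, define the real quantities H = (1/2)·𝒳_e/𝒴_e − 1/𝒴_e, A_u = (1/2)·(𝒳_u − 𝒴_u·𝒳_e/𝒴_e) + 𝒴_u/𝒴_e for hermitian u, L² = (1/2)·Σ_{α,β} 𝓛_{e_α,e_β}², and A² = −1 + Σ_α A_{e_α}². Then −2·H·(L² − (n²(n−1)/4)·μ²) = (n/2)²·(n − 1 − A²). -/

import Mathlib

open Matrix
open scoped ComplexOrder

/-- The Jordan product of two complex matrices. -/
noncomputable def jordanProd {n : ℕ} (a b : Matrix (Fin n) (Fin n) ℂ) :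
    Matrix (Fin n) (Fin n) ℂ :=
  (1 / 2 : ℂ) • (a * b + b * a)

/-- The Jordan triple product `{uvw} = u∘(v∘w) − v∘(u∘w) + (u∘v)∘w`. -/
noncomputable def jTriple {n : ℕ} (u v w : Matrix (Fin n) (Fin n) ℂ) :
    Matrix (Fin n) (Fin n) ℂ :=
  jordanProd u (jordanProd v w) - jordanProd v (jordanProd u w)
    + jordanProd (jordanProd u v) w

/-- The real inner product `⟨u|v⟩ = (1/n)·Re(tr(u·v))`. -/
noncomputable def jInner {n : ℕ} (u v : Matrix (Fin n) (Fin n) ℂ) : ℝ :=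
  (1 / n : ℝ) * ((u * v).trace).re

/-- `𝒴_u = ⟨u|x⟩`. -/
noncomputable def Yfun {n : ℕ} (x u : Matrix (Fin n) (Fin n) ℂ) : ℝ :=
  jInner u x

/-- `𝓛_u = ⟨u∘x|π⟩`. -/
noncomputable def Lfun {n : ℕ} (x p u : Matrix (Fin n) (Fin n) ℂ) : ℝ :=
  jInner (jordanProd u x) p

/-- `𝓛_{u,v} = ⟨u∘(v∘x) − v∘(u∘x)|π⟩ − μ·i·tr(x·[u,v])/(2·tr x)`. -/
noncomputable def LLfun {n : ℕ} (μ : ℝ) (x p u v : Matrix (Fin n) (Fin n) ℂ) : ℝ :=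
  jInner (jordanProd u (jordanProd v x) - jordanProd v (jordanProd u x)) p
    - μ * (Complex.I * (x * (u * v - v * u)).trace).re / (2 * (x.trace).re)

/-- `𝒳_u = ⟨x|{πuπ}⟩ + n·μ²·Re(tr(x·u))/(tr x)² − μ·i·tr(x·[u,π])/(tr x)`. -/
noncomputable def Xfun {n : ℕ} (μ : ℝ) (x p u : Matrix (Fin n) (Fin n) ℂ) : ℝ :=
  jInner x (jTriple p u p) + (n : ℝ) * μ ^ 2 * ((x * u).trace).re / ((x.trace).re) ^ 2
    - μ * (Complex.I * (x * (u * p - p * u)).trace).re / (x.trace).re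

/-- The Hamiltonian `H = (1/2)·𝒳_e/𝒴_e − 1/𝒴_e`. -/
noncomputable def Hfun {n : ℕ} (μ : ℝ) (x p : Matrix (Fin n) (Fin n) ℂ) : ℝ :=
  (1 / 2 : ℝ) * Xfun μ x p 1 / Yfun x 1 - 1 / Yfun x 1

/-- The Laplace–Runge–Lenz component `A_u = (1/2)·(𝒳_u − 𝒴_u·𝒳_e/𝒴_e) + 𝒴_u/𝒴_e`. -/
noncomputable def Afun {n : ℕ} (μ : ℝ) (x p u : Matrix (Fin n) (Fin n) ℂ) : ℝ :=
  (1 / 2 : ℝ) * (Xfun μ x p u - Yfun x u * Xfun μ x p 1 / Yfun x 1) + Yfun x u / Yfun x 1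

/-!
Put `η = nμ / tr x` and `z = π + iη`. The matrices `B = z x zᴴ` and `K = x zᴴ - z x` represent the
constants of motion: `𝒳_u = ⟨u|B⟩` and `𝓛_{u,v} = ⟨[u,v]|K⟩ / 4`, hence `A_u = ⟨u|B/2 - Hx⟩`. Summing
over a Parseval frame turns `L²` and `A²` into traces of `K²` and `(B/2 - Hx)²`. Because `x` and `B`
have rank at most one, these traces reduce to the single quantity
`Δ = tr x · tr B - tr (x B)`, namely `L² - n²(n-1)μ²/4 = nΔ/8` and `Σ A_α² = n + HΔ/n`.
-/

section RankOne

variable {K m o : Type*} [Field K] [Fintype o]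

lemma exists_eq_vecMulVec_of_rank_le_one {x : Matrix m o K} (hx : x.rank ≤ 1) :
    ∃ v w, x = vecMulVec v w := by
  classical
  obtain ⟨⟨v, _⟩, hv⟩ := finrank_le_one_iff.mp hx
  choose w hw using fun j => hv ⟨x *ᵥ Pi.single j 1, Pi.single j 1, rfl⟩
  refine ⟨v, w, Matrix.ext fun i j => ?_⟩
  have hij : w j * v i = x i j := by simpa using congrFun (congrArg Subtype.val (hw j)) i
  rw [vecMulVec_apply, ← hij, mul_comm]

variable [Fintype m]

lemma mul_mul_self_of_rank_le_one {x : Matrix m o K} (hx : x.rank ≤ 1) (y : Matrix o m K) :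
    x * y * x = (x * y).trace • x := by
  obtain ⟨v, w, rfl⟩ := exists_eq_vecMulVec_of_rank_le_one hx
  rw [vecMulVec_mul, vecMulVec_mul_vecMulVec, trace_vecMulVec, vecMulVec_smul, dotProduct_comm v]

lemma mul_self_of_rank_le_one {x : Matrix m m K} (hx : x.rank ≤ 1) : x * x = x.trace • x := by
  classical
  simpa using mul_mul_self_of_rank_le_one hx 1

lemma trace_mul_self_of_rank_le_one {x : Matrix m m K} (hx : x.rank ≤ 1) :
    (x * x).trace = x.trace ^ 2 := by
  rw [mul_self_of_rank_le_one hx, trace_smul, smul_eq_mul, sq]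

lemma trace_ne_zero_of_isHermitian_of_rank_eq_one [PartialOrder K] [StarRing K] [StarOrderedRing K]
    {x : Matrix m m K} (hx : x.IsHermitian) (hrank : x.rank = 1) : x.trace ≠ 0 := by
  intro htr
  have hsq : xᴴ * x = 0 := by rw [hx.eq, mul_self_of_rank_le_one hrank.le, htr, zero_smul]
  rw [conjTranspose_mul_self_eq_zero.mp hsq, rank_zero] at hrank
  exact zero_ne_one hrank

/-- The trace defect `tr a · tr b - tr (a b)`. For `a = v vᴴ` and `b = w wᴴ` it is the Gram
determinant `‖v‖² ‖w‖² - |⟨v, w⟩|²`. It is the quantity `Δ` to which `L²` and `A²` reduce. -/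
def gramDet {R : Type*} [CommRing R] (a b : Matrix m m R) : R :=
  a.trace * b.trace - (a * b).trace

lemma trace_sq_mul_sub_mul_of_rank_le_one {x : Matrix m m K} (hx : x.rank ≤ 1)
    (y z : Matrix m m K) :
    ((x * y - z * x) * (x * y - z * x)).trace
      = (x * y - z * x).trace ^ 2 - 2 * gramDet x (z * x * y) := by
  have hxy : (x * y * (x * y)).trace = (x * y).trace ^ 2 :=
    trace_mul_self_of_rank_le_one ((rank_mul_le_left x y).trans hx)
  have hzx : (z * x * (z * x)).trace = (z * x).trace ^ 2 :=
    trace_mul_self_of_rank_le_one ((rank_mul_le_right z x).trans hx)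
  have hzxxy : (z * x * (x * y)).trace = x.trace * (z * x * y).trace := by
    rw [← mul_assoc, mul_assoc z, mul_self_of_rank_le_one hx, Matrix.mul_smul, Matrix.smul_mul,
      trace_smul, smul_eq_mul]
  have hxzxy : (x * (z * x * y)).trace = (x * y).trace * (z * x).trace := by
    rw [trace_mul_comm, mul_assoc z, mul_assoc z, mul_mul_self_of_rank_le_one hx, Matrix.mul_smul,
      trace_smul, smul_eq_mul]
  simp only [gramDet, mul_sub, sub_mul, trace_sub, trace_mul_comm (x * y) (z * x), hxy, hzx, hzxxy,
    hxzxy]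
  ring

end RankOne

section Commutator

variable {R m : Type*} [CommRing R] [Fintype m]

lemma trace_lie_mul (a b c : Matrix m m R) : (⁅a, b⁆ * c).trace = (a * ⁅b, c⁆).trace := by
  simp only [Ring.lie_def, mul_sub, sub_mul, trace_sub, ← mul_assoc, trace_mul_cycle a c b]

lemma trace_lie_mul_lie (a b : Matrix m m R) :
    (⁅a, b⁆ * ⁅a, b⁆).trace = 2 * (a * b * a * b).trace - 2 * (a * a * (b * b)).trace := by
  have habba : (a * b * (b * a)).trace = (a * a * (b * b)).trace := by
    rw [← mul_assoc, trace_mul_comm]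
    simp only [mul_assoc]
  have hbaab : (b * a * (a * b)).trace = (a * a * (b * b)).trace := by
    rw [mul_assoc, trace_mul_comm]
    simp only [mul_assoc]
  have hbaba : (b * a * (b * a)).trace = (a * b * a * b).trace := by
    rw [mul_assoc, trace_mul_comm]
    simp only [mul_assoc]
  simp only [Ring.lie_def, mul_sub, sub_mul, trace_sub]
  rw [habba, hbaab, hbaba, ← mul_assoc (a * b)]
  ring

variable {ι : Type*} [Fintype ι] {E : ι → Matrix m m R} {c : R}

lemma sum_mul_mul_self_of_sum_trace_smul [DecidableEq m]
    (hE : ∀ u, ∑ α, (E α * u).trace • E α = c • u) (a : Matrix m m R) :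
    ∑ α, E α * a * E α = (c * a.trace) • (1 : Matrix m m R) := by
  ext i l
  calc (∑ α, E α * a * E α) i l
      = ∑ k, (∑ α, (E α * (a * (single k i 1 : Matrix m m R))).trace • E α) k l := by
        simp only [Matrix.sum_apply, ← mul_assoc, trace_mul_single, Matrix.smul_apply, smul_eq_mul,
          mul_apply (M := _ * a), MulOpposite.op_one, one_smul]
        exact Finset.sum_comm
    _ = ∑ k, c * (a * (single k i 1 : Matrix m m R)) k l := by
        simp only [hE, Matrix.smul_apply, smul_eq_mul]
    _ = ((c * a.trace) • (1 : Matrix m m R)) i l := by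
        rcases eq_or_ne l i with rfl | hli
        · simp [trace, Finset.mul_sum]
        · simp [hli, hli.symm]

lemma sum_trace_lie_mul_lie (hE : ∀ u, ∑ α, (E α * u).trace • E α = c • u) (b : Matrix m m R) :
    ∑ α, (⁅E α, b⁆ * ⁅E α, b⁆).trace
      = 2 * c * b.trace ^ 2 - 2 * c * Fintype.card m * (b * b).trace := by
  classical
  have hcasimir : ∑ α, E α * E α = (c * Fintype.card m) • (1 : Matrix m m R) := by
    simpa only [mul_one, trace_one] using sum_mul_mul_self_of_sum_trace_smul hE 1
  simp only [trace_lie_mul_lie, Finset.sum_sub_distrib, ← Finset.mul_sum, ← trace_sum,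
    ← Matrix.sum_mul, hcasimir, sum_mul_mul_self_of_sum_trace_smul hE, Matrix.smul_mul, one_mul,
    trace_smul, smul_eq_mul]
  ring

end Commutator

lemma trace_im_eq_zero {m : Type*} [Fintype m] {a : Matrix m m ℂ} (ha : a.IsHermitian) :
    a.trace.im = 0 :=
  Complex.conj_eq_iff_im.mp (by rw [← Complex.star_def, ← trace_conjTranspose, ha.eq])

section JordanProduct

variable {n : ℕ}

lemma jordanProd_isHermitian {a b : Matrix (Fin n) (Fin n) ℂ} (ha : a.IsHermitian)
    (hb : b.IsHermitian) : (jordanProd a b).IsHermitian := by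
  simp [jordanProd, IsHermitian, conjTranspose_smul, ha.eq, hb.eq, add_comm]

lemma jordanProd_jordanProd_sub (u v x : Matrix (Fin n) (Fin n) ℂ) :
    jordanProd u (jordanProd v x) - jordanProd v (jordanProd u x)
      = (1 / 4 : ℝ) • ⁅⁅u, v⁆, x⁆ := by
  simp only [jordanProd, Ring.lie_def, Matrix.mul_smul, Matrix.smul_mul, mul_add, add_mul, mul_sub,
    sub_mul, mul_assoc]
  module

lemma jTriple_self_outer (p u : Matrix (Fin n) (Fin n) ℂ) : jTriple p u p = p * u * p := by
  simp only [jTriple, jordanProd, Matrix.mul_smul, Matrix.smul_mul, mul_add, add_mul, mul_assoc]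
  module

end JordanProduct

section InnerProduct

variable {n : ℕ} {a b : Matrix (Fin n) (Fin n) ℂ}

lemma jInner_comm (a b : Matrix (Fin n) (Fin n) ℂ) : jInner a b = jInner b a := by
  rw [jInner, jInner, trace_mul_comm]

lemma jInner_sub_right (a b c : Matrix (Fin n) (Fin n) ℂ) :
    jInner a (b - c) = jInner a b - jInner a c := by
  simp only [jInner, mul_sub, trace_sub, Complex.sub_re]

lemma jInner_smul_right (r : ℝ) (a b : Matrix (Fin n) (Fin n) ℂ) :
    jInner a (r • b) = r * jInner a b := by
  simp only [jInner, Matrix.mul_smul, trace_smul, Complex.smul_re, smul_eq_mul]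
  ring

lemma jInner_lie_left (a b c : Matrix (Fin n) (Fin n) ℂ) : jInner ⁅a, b⁆ c = jInner a ⁅b, c⁆ := by
  rw [jInner, jInner, trace_lie_mul]

lemma ofReal_jInner (ha : a.IsHermitian) (hb : b.IsHermitian) :
    (jInner a b : ℂ) = (1 / n : ℂ) * (a * b).trace := by
  have hreal : (((a * b).trace.re : ℝ) : ℂ) = (a * b).trace := by
    rw [← Complex.conj_eq_iff_re, ← Complex.star_def, ← trace_conjTranspose, conjTranspose_mul,
      ha.eq, hb.eq, trace_mul_comm]
  rw [jInner, Complex.ofReal_mul, hreal]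
  push_cast
  rfl

variable [NeZero n]

lemma trace_re_eq_mul_jInner_one (a : Matrix (Fin n) (Fin n) ℂ) :
    a.trace.re = n * jInner 1 a := by
  have hn : (n : ℝ) ≠ 0 := NeZero.ne _
  rw [jInner, one_mul]
  field_simp

lemma jInner_self_of_rank_le_one (ha : a.IsHermitian) (hrank : a.rank ≤ 1) :
    jInner a a = n * jInner 1 a ^ 2 := by
  have hn : (n : ℝ) ≠ 0 := NeZero.ne _
  rw [jInner, trace_mul_self_of_rank_le_one hrank, sq, Complex.mul_re, trace_im_eq_zero ha,
    trace_re_eq_mul_jInner_one]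
  field_simp
  ring

lemma gramDet_re (ha : a.IsHermitian) :
    (gramDet a b).re = n ^ 2 * jInner 1 a * jInner 1 b - n * jInner a b := by
  have hn : (n : ℝ) ≠ 0 := NeZero.ne _
  have hab : (a * b).trace.re = n * jInner a b := by
    rw [jInner]
    field_simp
  rw [gramDet, Complex.sub_re, Complex.mul_re, trace_im_eq_zero ha, trace_re_eq_mul_jInner_one,
    trace_re_eq_mul_jInner_one, hab]
  ring

end InnerProduct

section ParsevalFrame

variable {n : ℕ} {ι : Type*} [Fintype ι]

/-- A finite Parseval frame of the real inner product space of Hermitian `n × n` matrices: the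
reproducing property of an orthonormal basis, without linear independence. -/
structure IsHermitianParsevalFrame (E : ι → Matrix (Fin n) (Fin n) ℂ) : Prop where
  isHermitian : ∀ α, (E α).IsHermitian
  eq_sum_jInner_smul : ∀ u : Matrix (Fin n) (Fin n) ℂ, u.IsHermitian →
    u = ∑ α, (jInner (E α) u : ℂ) • E α

namespace IsHermitianParsevalFrame

variable {E : ι → Matrix (Fin n) (Fin n) ℂ}

lemma sum_jInner_sq (hE : IsHermitianParsevalFrame E) {u : Matrix (Fin n) (Fin n) ℂ}
    (hu : u.IsHermitian) : ∑ α, jInner (E α) u ^ 2 = jInner u u := by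
  have hexpand := congrArg (jInner u) (hE.eq_sum_jInner_smul u hu)
  simp only [jInner, Finset.mul_sum, trace_sum, Complex.re_sum, Matrix.mul_smul, trace_smul,
    smul_eq_mul, Complex.re_ofReal_mul] at hexpand
  simp only [jInner, hexpand, trace_mul_comm u]
  exact Finset.sum_congr rfl fun α _ => by ring

variable [NeZero n]

lemma sum_trace_smul (hE : IsHermitianParsevalFrame E) (u : Matrix (Fin n) (Fin n) ℂ) :
    ∑ α, (E α * u).trace • E α = (n : ℂ) • u := by
  have hn : (n : ℂ) ≠ 0 := NeZero.ne _
  have hherm : ∀ v : Matrix (Fin n) (Fin n) ℂ, v.IsHermitian →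
      ∑ α, (E α * v).trace • E α = (n : ℂ) • v := by
    intro v hv
    conv_rhs => rw [hE.eq_sum_jInner_smul v hv, Finset.smul_sum]
    refine Finset.sum_congr rfl fun α _ => ?_
    rw [ofReal_jInner (hE.isHermitian α) hv, smul_smul, ← mul_assoc, mul_one_div_cancel hn,
      one_mul]
  rw [← realPart_add_I_smul_imaginaryPart u]
  simp only [mul_add, Matrix.mul_smul, trace_add, trace_smul, add_smul, Finset.sum_add_distrib,
    smul_assoc, ← Finset.smul_sum, hherm _ (realPart u).2, hherm _ (imaginaryPart u).2, smul_add,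
    smul_comm (n : ℂ) Complex.I]

lemma sum_jInner_lie_sq (hE : IsHermitianParsevalFrame E) {K : Matrix (Fin n) (Fin n) ℂ}
    (hK : Kᴴ = -K) :
    ∑ α, ∑ β, jInner ⁅E α, E β⁆ K ^ 2 = 2 * (K.trace ^ 2).re - 2 * n * (K * K).trace.re := by
  have hn : (n : ℝ) ≠ 0 := NeZero.ne _
  have hlie : ∀ β, ⁅E β, K⁆.IsHermitian := fun β => by
    rw [IsHermitian, Ring.lie_def, conjTranspose_sub, conjTranspose_mul, conjTranspose_mul, hK,
      (hE.isHermitian β).eq]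
    noncomm_ring
  have hcasimir : ∑ β, (⁅E β, K⁆ * ⁅E β, K⁆).trace
      = (2 * n : ℝ) * K.trace ^ 2 - (2 * n ^ 2 : ℝ) * (K * K).trace := by
    rw [sum_trace_lie_mul_lie hE.sum_trace_smul, Fintype.card_fin]
    push_cast
    ring
  calc ∑ α, ∑ β, jInner ⁅E α, E β⁆ K ^ 2
      = ∑ β, jInner ⁅E β, K⁆ ⁅E β, K⁆ := by
        rw [Finset.sum_comm]
        simp only [jInner_lie_left, hE.sum_jInner_sq (hlie _)]
    _ = 1 / n * (∑ β, (⁅E β, K⁆ * ⁅E β, K⁆).trace).re := by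
        simp only [jInner, ← Finset.mul_sum, Complex.re_sum]
    _ = 2 * (K.trace ^ 2).re - 2 * n * (K * K).trace.re := by
        rw [hcasimir, Complex.sub_re, Complex.re_ofReal_mul, Complex.re_ofReal_mul]
        field_simp

end IsHermitianParsevalFrame

end ParsevalFrame

section ConstantsOfMotion

variable {n : ℕ} (μ : ℝ) (x p : Matrix (Fin n) (Fin n) ℂ)

/-- The momentum shifted by the magnetic charge, `z = π + i (nμ / tr x)`. -/
noncomputable def shiftedMomentum : Matrix (Fin n) (Fin n) ℂ :=
  p + (Complex.I * (n * μ / x.trace.re : ℝ)) • (1 : Matrix (Fin n) (Fin n) ℂ)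

/-- The matrix `z x zᴴ` representing the functional `u ↦ 𝒳_u`. -/
noncomputable def XMatrix : Matrix (Fin n) (Fin n) ℂ :=
  shiftedMomentum μ x p * x * (shiftedMomentum μ x p)ᴴ

/-- The skew-Hermitian matrix `x zᴴ - z x` representing `(u, v) ↦ 4 𝓛_{u,v}` as a functional of
`[u, v]`. -/
noncomputable def LLMatrix : Matrix (Fin n) (Fin n) ℂ :=
  x * (shiftedMomentum μ x p)ᴴ - shiftedMomentum μ x p * x

variable {x p}

lemma XMatrix_isHermitian (hx : x.IsHermitian) : (XMatrix μ x p).IsHermitian :=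
  isHermitian_mul_mul_conjTranspose _ hx

lemma rank_XMatrix_le : (XMatrix μ x p).rank ≤ x.rank :=
  (rank_mul_le_left _ _).trans (rank_mul_le_right _ _)

lemma LLMatrix_conjTranspose (hx : x.IsHermitian) : (LLMatrix μ x p)ᴴ = -LLMatrix μ x p := by
  simp [LLMatrix, hx.eq]

lemma conjTranspose_shiftedMomentum (hp : p.IsHermitian) :
    (shiftedMomentum μ x p)ᴴ
      = p - (Complex.I * (n * μ / x.trace.re : ℝ)) • (1 : Matrix (Fin n) (Fin n) ℂ) := by
  simp [shiftedMomentum, hp.eq, sub_eq_add_neg]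

lemma LLMatrix_eq (hp : p.IsHermitian) :
    LLMatrix μ x p = ⁅x, p⁆ - (Complex.I * (2 * (n * μ / x.trace.re) : ℝ)) • x := by
  rw [LLMatrix, conjTranspose_shiftedMomentum μ hp, shiftedMomentum, Ring.lie_def]
  simp only [mul_sub, add_mul, Matrix.mul_smul, Matrix.smul_mul, mul_one, one_mul]
  module

lemma trace_LLMatrix (hx : x.IsHermitian) (hp : p.IsHermitian) (htr : x.trace ≠ 0) :
    (LLMatrix μ x p).trace = (-(2 * n * μ) : ℝ) * Complex.I := by
  have hre : ((x.trace.re : ℝ) : ℂ) = x.trace :=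
    Complex.ext (Complex.ofReal_re _) (trace_im_eq_zero hx).symm
  rw [LLMatrix_eq μ hp, Ring.lie_def, trace_sub, trace_sub, trace_mul_comm, sub_self, trace_smul,
    smul_eq_mul]
  push_cast
  rw [hre]
  field_simp
  ring

lemma XMatrix_eq (hp : p.IsHermitian) :
    XMatrix μ x p
      = p * x * p - (Complex.I * (n * μ / x.trace.re : ℝ)) • ⁅p, x⁆
      + ((n * μ / x.trace.re) ^ 2 : ℝ) • x := by
  have hsq : (Complex.I * (n * μ / x.trace.re : ℝ)) * (Complex.I * (n * μ / x.trace.re : ℝ))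
      = -((n * μ / x.trace.re) ^ 2 : ℝ) := by
    rw [mul_mul_mul_comm, Complex.I_mul_I, neg_one_mul, ← Complex.ofReal_mul, sq]
  rw [XMatrix, conjTranspose_shiftedMomentum μ hp, shiftedMomentum, Ring.lie_def,
    ← Complex.coe_smul]
  simp only [mul_sub, add_mul, Matrix.mul_smul, Matrix.smul_mul, mul_one, one_mul, smul_smul,
    hsq]
  module

variable [NeZero n]

lemma Xfun_eq_jInner (hp : p.IsHermitian) (u : Matrix (Fin n) (Fin n) ℂ) :
    Xfun μ x p u = jInner u (XMatrix μ x p) := by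
  have hn : (n : ℝ) ≠ 0 := NeZero.ne _
  have hpup : (x * (p * u * p)).trace = (u * (p * x * p)).trace := by
    rw [mul_assoc p, ← mul_assoc, trace_mul_comm]
    simp only [mul_assoc]
  have hlie : (x * (u * p - p * u)).trace = (u * ⁅p, x⁆).trace := by
    rw [← Ring.lie_def, trace_mul_comm, trace_lie_mul]
  rw [Xfun, jInner, jTriple_self_outer, hpup, hlie, trace_mul_comm x u, jInner, XMatrix_eq μ hp]
  simp only [mul_add, mul_sub, Matrix.mul_smul, trace_add, trace_sub, trace_smul, smul_eq_mul,
    Complex.add_re, Complex.sub_re, Complex.smul_re, mul_right_comm Complex.I,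
    Complex.re_mul_ofReal]
  field_simp
  ring

lemma LLfun_eq_jInner (hp : p.IsHermitian) (u v : Matrix (Fin n) (Fin n) ℂ) :
    LLfun μ x p u v = 1 / 4 * jInner ⁅u, v⁆ (LLMatrix μ x p) := by
  have hn : (n : ℝ) ≠ 0 := NeZero.ne _
  rw [LLfun, jInner, jordanProd_jordanProd_sub, ← Ring.lie_def, trace_mul_comm x, Matrix.smul_mul,
    trace_smul, trace_lie_mul _ x, jInner, LLMatrix_eq μ hp]
  simp only [mul_sub, Matrix.mul_smul, trace_sub, trace_smul, Complex.sub_re, smul_eq_mul,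
    Complex.smul_re, mul_right_comm Complex.I, Complex.re_mul_ofReal]
  field_simp
  ring

lemma Afun_eq_jInner (hp : p.IsHermitian) (u : Matrix (Fin n) (Fin n) ℂ) :
    Afun μ x p u = jInner u ((1 / 2 : ℝ) • XMatrix μ x p - Hfun μ x p • x) := by
  rw [Afun, Hfun, jInner_sub_right, jInner_smul_right, jInner_smul_right, ← Xfun_eq_jInner μ hp,
    ← Yfun]
  ring

variable {ι : Type*} [Fintype ι] {E : ι → Matrix (Fin n) (Fin n) ℂ}

lemma half_sum_LLfun_sq (hE : IsHermitianParsevalFrame E) (hx : x.IsHermitian) (hrank : x.rank = 1)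
    (hp : p.IsHermitian) :
    1 / 2 * ∑ α, ∑ β, LLfun μ x p (E α) (E β) ^ 2
      = (n : ℝ) ^ 2 * (n - 1) / 4 * μ ^ 2 + n / 8 * (gramDet x (XMatrix μ x p)).re := by
  have htr : ((LLMatrix μ x p).trace ^ 2).re = -(4 * n ^ 2 * μ ^ 2) := by
    rw [trace_LLMatrix μ hx hp (trace_ne_zero_of_isHermitian_of_rank_eq_one hx hrank), mul_pow,
      Complex.I_sq, ← Complex.ofReal_pow, Complex.re_ofReal_mul, Complex.neg_re, Complex.one_re]
    ring
  have htr_sq : (LLMatrix μ x p * LLMatrix μ x p).trace.re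
      = -(4 * n ^ 2 * μ ^ 2) - 2 * (gramDet x (XMatrix μ x p)).re := by
    rw [← htr, LLMatrix, trace_sq_mul_sub_mul_of_rank_le_one hrank.le, XMatrix]
    simp
  simp only [LLfun_eq_jInner μ hp, mul_pow, ← Finset.mul_sum,
    hE.sum_jInner_lie_sq (LLMatrix_conjTranspose μ hx), htr, htr_sq]
  ring

lemma sum_Afun_sq (hE : IsHermitianParsevalFrame E) (hx : x.IsHermitian) (hrank : x.rank = 1)
    (hp : p.IsHermitian) :
    ∑ α, Afun μ x p (E α) ^ 2
      = n + Hfun μ x p / n * (gramDet x (XMatrix μ x p)).re := by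
  have hn : (n : ℝ) ≠ 0 := NeZero.ne _
  have hB : (XMatrix μ x p).IsHermitian := XMatrix_isHermitian μ hx
  have hY : jInner 1 x ≠ 0 := fun h =>
    trace_ne_zero_of_isHermitian_of_rank_eq_one hx hrank <|
      Complex.ext (by simp [trace_re_eq_mul_jInner_one, h]) (trace_im_eq_zero hx)
  have hH : Hfun μ x p * jInner 1 x = 1 / 2 * jInner 1 (XMatrix μ x p) - 1 := by
    rw [Hfun, Yfun, Xfun_eq_jInner μ hp]
    field_simp
  simp only [Afun_eq_jInner μ hp]
  set H := Hfun μ x p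
  set B := XMatrix μ x p
  have hD : ((1 / 2 : ℝ) • B - H • x).IsHermitian :=
    (hB.smul (IsSelfAdjoint.all _)).sub (hx.smul (IsSelfAdjoint.all _))
  calc ∑ α, jInner (E α) ((1 / 2 : ℝ) • B - H • x) ^ 2
      = 1 / 4 * jInner B B - H * jInner x B + H ^ 2 * jInner x x := by
        rw [hE.sum_jInner_sq hD, jInner_sub_right, jInner_smul_right, jInner_smul_right,
          jInner_comm _ B, jInner_comm _ x]
        simp only [jInner_sub_right, jInner_smul_right, jInner_comm B x]
        ring
    _ = n * (1 / 4 * jInner 1 B ^ 2 + (H * jInner 1 x) ^ 2) - H * jInner x B := by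
        rw [jInner_self_of_rank_le_one hB ((rank_XMatrix_le μ).trans hrank.le),
          jInner_self_of_rank_le_one hx hrank.le]
        ring
    _ = n + n * jInner 1 B * (H * jInner 1 x) - H * jInner x B := by
        rw [hH]
        ring
    _ = n + H / n * (gramDet x B).re := by
        rw [gramDet_re hx]
        field_simp
        ring

end ConstantsOfMotion

theorem hamiltonian_angular_momentum_LRL_relation_general
    {n : ℕ} {ι : Type*} [Fintype ι] (μ : ℝ) {x p : Matrix (Fin n) (Fin n) ℂ}
    {E : ι → Matrix (Fin n) (Fin n) ℂ} (hE : IsHermitianParsevalFrame E)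
    (hx : x.IsHermitian) (hrank : x.rank = 1) (hp : p.IsHermitian) :
    -2 * Hfun μ x p
        * ((1 / 2 : ℝ) * (∑ α, ∑ β, (LLfun μ x p (E α) (E β)) ^ 2)
            - ((n : ℝ) ^ 2 * ((n : ℝ) - 1) / 4) * μ ^ 2)
      = ((n : ℝ) / 2) ^ 2
          * ((n : ℝ) - 1 - (-1 + ∑ α, (Afun μ x p (E α)) ^ 2)) := by
  have hn : 1 ≤ n := by simpa [hrank] using x.rank_le_card_width
  have : NeZero n := ⟨by lia⟩
  have hn' : (n : ℝ) ≠ 0 := NeZero.ne _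
  rw [half_sum_LLfun_sq μ hE hx hrank hp, sum_Afun_sq μ hE hx hrank hp]
  field_simp
  ring

theorem hamiltonian_angular_momentum_LRL_relation
    (n : ℕ) (hn : 2 ≤ n) (μ : ℝ)
    (x : Matrix (Fin n) (Fin n) ℂ)
    (hherm : x.IsHermitian) (hpsd : x.PosSemidef) (hrank : x.rank = 1)
    (p w : Matrix (Fin n) (Fin n) ℂ) (hw : w.IsHermitian) (hp : p = jordanProd x w)
    (E : Fin (n ^ 2) → Matrix (Fin n) (Fin n) ℂ)
    (hEherm : ∀ α, (E α).IsHermitian)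
    (hEorth : ∀ α β, jInner (E α) (E β) = if α = β then 1 else 0)
    (hEspan : ∀ u : Matrix (Fin n) (Fin n) ℂ, u.IsHermitian →
      u = ∑ α, (jInner (E α) u : ℂ) • E α)
    :
    -2 * Hfun μ x p
        * ((1 / 2 : ℝ) * (∑ α, ∑ β, (LLfun μ x p (E α) (E β)) ^ 2)
            - ((n : ℝ) ^ 2 * ((n : ℝ) - 1) / 4) * μ ^ 2)
      = ((n : ℝ) / 2) ^ 2
          * ((n : ℝ) - 1 - (-1 + ∑ α, (Afun μ x p (E α)) ^ 2)) :=
  hamiltonian_angular_momentum_LRL_relation_general μ ⟨hEherm, hEspan⟩ hherm hrank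
    (hp ▸ jordanProd_isHermitian hherm hw)
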